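/- There exist constants c > 0 and C > 0 such that for every sign σ ∈ {+1,−1} and all integers n₁, n₂ with n₀ := n₁ − n₂ ≠ 0 and n₁ + n₂ + σ·sgn(n₀) ≠ 0, one has c · ⟨n₀⟩ · ⟨n₁+n₂⟩ ≤ ⟨ n₁² − n₂² + σ⟨n₀⟩ ⟩ ≤ C · ⟨n₀⟩ · ⟨n₁+n₂⟩. -/

import Mathlib

/-- `⟨x⟩ = (1+x²)^{1/2}`. -/
noncomputable def jbR (x : ℝ) : ℝ := Real.sqrt (1 + x ^ 2)

theorem le_of_sq_le_sq_aux {a b : ℝ} (h : a ^ 2 ≤ b ^ 2) (hb : 0 ≤ b) : a ≤ b :=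
  (le_abs_self a).trans (abs_le_of_sq_le_sq h hb)

theorem jb_neg (x : ℝ) : jbR (-x) = jbR x := by simp [jbR]

theorem jb_sq (x : ℝ) : jbR x ^ 2 = 1 + x ^ 2 := Real.sq_sqrt (by positivity)

theorem jb_nonneg (x : ℝ) : 0 ≤ jbR x := Real.sqrt_nonneg _

theorem jb_key (m t : ℤ) (hm : 1 ≤ m) (ht : t ≠ -1) :
    1 / 8 * jbR (m : ℝ) * jbR (t : ℝ) ≤ jbR ((m : ℝ) * (t : ℝ) + jbR (m : ℝ)) ∧
    jbR ((m : ℝ) * (t : ℝ) + jbR (m : ℝ)) ≤ 2 * jbR (m : ℝ) * jbR (t : ℝ) := by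
  have hm' : (1 : ℝ) ≤ m := by exact_mod_cast hm
  have ht' : (0 : ℝ) ≤ t ∨ (t : ℝ) ≤ -2 := by
    rcases (by omega : 0 ≤ t ∨ t ≤ -2) with h | h
    · left; exact_mod_cast h
    · right; exact_mod_cast h
  have hJ0 := jb_nonneg (m : ℝ)
  have hT0 := jb_nonneg (t : ℝ)
  have hJ := jb_sq (m : ℝ)
  have hT := jb_sq (t : ℝ)
  have hX := jb_sq ((m : ℝ) * (t : ℝ) + jbR (m : ℝ))
  have hX0 := jb_nonneg ((m : ℝ) * (t : ℝ) + jbR (m : ℝ))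
  generalize jbR ((m : ℝ) * (t : ℝ) + jbR (m : ℝ)) = X at *
  generalize jbR (m : ℝ) = J at *
  generalize jbR (t : ℝ) = T at *
  generalize (m : ℝ) = m at *
  generalize (t : ℝ) = t at *
  constructor
  · apply le_of_sq_le_sq_aux ?_ hX0
    have e : (1 / 8 * J * T) ^ 2 = 1 / 64 * (1 + m ^ 2) * (1 + t ^ 2) := by
      rw [mul_pow, mul_pow, hJ, hT]; ring
    rw [e, hX]
    rcases ht' with h | h
    · have h1 : 0 ≤ m * t * J := by positivity
      nlinarith [sq_nonneg (m * t), mul_nonneg (sub_nonneg.2 (one_le_pow₀ hm' : 1 ≤ m ^ 2)) (sq_nonneg t)]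
    · have h1 : J ≤ m + 1 / 2 := by nlinarith
      have h2 : m * (-t) / 4 ≤ -(m * t + J) := by nlinarith
      have h3 : 0 ≤ m * (-t) / 4 := by
        have : 0 ≤ m * (-t) := mul_nonneg (by linarith) (by linarith)
        linarith
      have h4 := pow_le_pow_left₀ h3 h2 2
      have h5 : 1 + m ^ 2 ≤ 2 * m ^ 2 := by nlinarith
      have h6 : 1 + t ^ 2 ≤ 2 * t ^ 2 := by nlinarith
      have h7 := mul_le_mul h5 h6 (by positivity) (by positivity)
      nlinarith
  · apply le_of_sq_le_sq_aux ?_ (by positivity)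
    have e : (2 * J * T) ^ 2 = 4 * (1 + m ^ 2) * (1 + t ^ 2) := by
      rw [mul_pow, mul_pow, hJ, hT]; ring
    rw [e, hX]
    nlinarith [sq_nonneg (m * t - J), sq_nonneg (m * t), sq_nonneg t, sq_nonneg m]

/-- Factorization of the Zakharov phase: there are `c, C > 0` such that
for every sign `σ ∈ {±1}` and all integers `n₁, n₂` with `n₀ := n₁ - n₂ ≠ 0` and
`n₁ + n₂ + σ sgn(n₀) ≠ 0`, one has
`c ⟨n₀⟩ ⟨n₁+n₂⟩ ≤ ⟨n₁² - n₂² + σ⟨n₀⟩⟩ ≤ C ⟨n₀⟩ ⟨n₁+n₂⟩`. -/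
theorem Zakharov_phase_factorization :
    ∃ c C : ℝ, 0 < c ∧ 0 < C ∧
      ∀ σ : ℤ, (σ = 1 ∨ σ = -1) →
        ∀ n₁ n₂ : ℤ, n₁ - n₂ ≠ 0 → n₁ + n₂ + σ * Int.sign (n₁ - n₂) ≠ 0 →
          c * jbR ((n₁ - n₂ : ℤ) : ℝ) * jbR ((n₁ + n₂ : ℤ) : ℝ)
              ≤ jbR (((n₁ ^ 2 - n₂ ^ 2 : ℤ) : ℝ) + (σ : ℝ) * jbR ((n₁ - n₂ : ℤ) : ℝ)) ∧
            jbR (((n₁ ^ 2 - n₂ ^ 2 : ℤ) : ℝ) + (σ : ℝ) * jbR ((n₁ - n₂ : ℤ) : ℝ))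
              ≤ C * jbR ((n₁ - n₂ : ℤ) : ℝ) * jbR ((n₁ + n₂ : ℤ) : ℝ) := by
  refine ⟨1/8, 2, by norm_num, by norm_num, ?_⟩
  intro σ hσ n₁ n₂ h0 h1
  have e : n₁ ^ 2 - n₂ ^ 2 = (n₁ - n₂) * (n₁ + n₂) := by ring
  rw [e]
  generalize n₁ - n₂ = d at *
  generalize n₁ + n₂ = s at *
  rcases lt_or_gt_of_ne h0 with hd | hd
  · rw [Int.sign_eq_neg_one_of_neg hd] at h1
    rcases hσ with rfl | rfl
    · have := jb_key (-d) (-s) (by omega) (by omega)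
      have e1 : ((((-d : ℤ) : ℝ)) * ((-s : ℤ) : ℝ) + jbR ((-d : ℤ) : ℝ))
          = ((d * s : ℤ) : ℝ) + ((1 : ℤ) : ℝ) * jbR (d : ℝ) := by
        push_cast; rw [jb_neg]; ring
      rw [e1] at this
      push_cast at this ⊢
      rwa [jb_neg, jb_neg] at this
    · have := jb_key (-d) s (by omega) (by omega)
      have e1 : ((((-d : ℤ) : ℝ)) * ((s : ℤ) : ℝ) + jbR ((-d : ℤ) : ℝ))
          = -(((d * s : ℤ) : ℝ) + ((-1 : ℤ) : ℝ) * jbR (d : ℝ)) := by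
        push_cast; rw [jb_neg]; ring
      rw [e1, jb_neg] at this
      push_cast at this ⊢
      rwa [jb_neg] at this
  · rw [Int.sign_eq_one_of_pos hd] at h1
    rcases hσ with rfl | rfl
    · have := jb_key d s (by omega) (by omega)
      push_cast at this ⊢
      rwa [one_mul]
    · have := jb_key d (-s) (by omega) (by omega)
      have e1 : ((((d : ℤ) : ℝ)) * ((-s : ℤ) : ℝ) + jbR ((d : ℤ) : ℝ))
          = -(((d * s : ℤ) : ℝ) + ((-1 : ℤ) : ℝ) * jbR (d : ℝ)) := by
        push_cast; ring
      rw [e1, jb_neg] at this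
      push_cast at this ⊢
      rwa [jb_neg] at this
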